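/- In the mixed type system M2: if ⊢_M2 T : ∀x{N^C[x] → ¬¬N[x]}, then T is a storage operator for classical integers, i.e. for every n ∈ ℕ there is a λC-term τₙ ≃β n̲ such that for every classical integer θₙ of value n (every closed λC-term with ⊢_M2 θₙ : N^C[sⁿ(0)]) there is a substitution σ with (T)θₙ f ≻_C (f)σ(τₙ) (f a fresh variable). -/

import Mathlib

/- Pure untyped λ-calculus with de Bruijn indices. -/

inductive Lam : Type
  | var : ℕ → Lam
  | app : Lam → Lam → Lam
  | abs : Lam → Lam
  deriving DecidableEq

namespace Lam

/-- Renaming of free variables. -/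
def rename (ρ : ℕ → ℕ) : Lam → Lam
  | var i => var (ρ i)
  | app u v => app (u.rename ρ) (v.rename ρ)
  | abs u => abs (u.rename (fun i => match i with | 0 => 0 | j+1 => ρ j + 1))

/-- Lifting of a simultaneous substitution under a binder. -/
def liftSub (σ : ℕ → Lam) : ℕ → Lam
  | 0 => var 0
  | i+1 => (σ i).rename (· + 1)

/-- Simultaneous (capture-avoiding) substitution of the free variables. -/
def subst (σ : ℕ → Lam) : Lam → Lam
  | var i => σ i
  | app u v => app (u.subst σ) (v.subst σ)
  | abs u => abs (u.subst (liftSub σ))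

/-- `u.subst0 v` is `u[v/x]` for the first variable. -/
def subst0 (u v : Lam) : Lam :=
  u.subst (fun i => match i with | 0 => v | j+1 => var j)

/-- One step of β-reduction (anywhere in the term). -/
inductive Beta : Lam → Lam → Prop
  | beta (u v : Lam) : Beta (app (abs u) v) (u.subst0 v)
  | appL {u u'} (v) : Beta u u' → Beta (app u v) (app u' v)
  | appR (u) {v v'} : Beta v v' → Beta (app u v) (app u v')
  | abs {u u'} : Beta u u' → Beta (abs u) (abs u')

/-- β-equivalence `≃β`. -/
def BetaEq : Lam → Lam → Prop := Relation.EqvGen Beta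

/-- A term is normal if it has no β-redex. -/
def Normal (t : Lam) : Prop := ∀ u, ¬ Beta t u

def IsAbs : Lam → Prop
  | abs _ => True
  | _ => False

/-- One step of head reduction: reduction of the head redex. -/
inductive HeadStep : Lam → Lam → Prop
  | beta (u v) : HeadStep (app (abs u) v) (u.subst0 v)
  | appL {u u'} (v) : ¬ u.IsAbs → HeadStep u u' → HeadStep (app u v) (app u' v)
  | abs {u u'} : HeadStep u u' → HeadStep (abs u) (abs u')

/-- `HeadRedN n u v` : `u` head-reduces to `v` in exactly `n` steps (`u ≻ v` with `n(u,v) = n`). -/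
inductive HeadRedN : ℕ → Lam → Lam → Prop
  | refl (u) : HeadRedN 0 u u
  | step {n u v w} : HeadStep u v → HeadRedN n v w → HeadRedN (n+1) u w

/-- `u ≻ v` : `v` is obtained from `u` by some head reductions. -/
def HeadRed (u v : Lam) : Prop := ∃ n, HeadRedN n u v

/-- Head normal form. -/
def HeadNF (t : Lam) : Prop := ∀ u, ¬ HeadStep t u

def ClosedUnder : ℕ → Lam → Prop
  | k, var i => i < k
  | k, app u v => ClosedUnder k u ∧ ClosedUnder k v
  | k, abs u => ClosedUnder (k+1) u

/-- Closed λ-term. -/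
def Closed (t : Lam) : Prop := ClosedUnder 0 t

/-- `(f)ⁿx` : `iterApp f n x = (f)(f)…(f)x`. -/
def iterApp (f : Lam) : ℕ → Lam → Lam
  | 0, x => x
  | n+1, x => app f (iterApp f n x)

/-- The Church integer `n̲ = λxλf(f)ⁿx`. -/
def church (n : ℕ) : Lam := abs (abs (iterApp (var 0) n (var 1)))

/-- `(t)w₁…wₖ`. -/
def appList (t : Lam) (ws : List Lam) : Lam := ws.foldl app t

/-- `T` is a storage operator for the closed normal term `t` :
there is `τ ≃β t` such that for every `θ ≃β t` there is a substitution `σ`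
(not touching the fresh variable `f`, represented by the de Bruijn index `0`)
with `(T)θf ≻ (f)σ(τ)`. -/
def IsStorageFor (T t : Lam) : Prop :=
  Closed T ∧ ∃ τ, BetaEq τ t ∧ ∀ θ, BetaEq θ t →
    ∃ σ : ℕ → Lam, σ 0 = var 0 ∧
      HeadRed (app (app T θ) (var 0)) (app (var 0) (τ.subst σ))

end Lam

/- Second order predicate logic : the types of the AF2 type system. -/

/-- A first order language: function symbols with arities, and predicate symbols. -/
structure Sig where
  Fn : Type
  arFn : Fn → ℕ
  Pr : Type

/-- First order terms over `S` (de Bruijn indices for first order variables). -/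
inductive FOTerm (S : Sig) : Type
  | var : ℕ → FOTerm S
  | fn : (f : S.Fn) → (Fin (S.arFn f) → FOTerm S) → FOTerm S

namespace FOTerm

variable {S : Sig}

def rename (ρ : ℕ → ℕ) : FOTerm S → FOTerm S
  | var i => var (ρ i)
  | fn f ts => fn f (fun i => (ts i).rename ρ)

def liftSub (σ : ℕ → FOTerm S) : ℕ → FOTerm S
  | 0 => var 0
  | i+1 => (σ i).rename (· + 1)

/-- Simultaneous substitution on first order terms. -/
def subst (σ : ℕ → FOTerm S) : FOTerm S → FOTerm S
  | var i => σ i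
  | fn f ts => fn f (fun i => (ts i).subst σ)

end FOTerm


/- Second order formulas with two kinds of predicate variables :
ordinary ones (`PK.pl`) and special ones (`PK.sp`). -/

inductive PK : Type
  | pl : PK
  | sp : PK
  deriving DecidableEq

/-- `FOTerm.freeIn j u` : the variable `j` occurs in `u`. -/
def FOTerm.freeIn {S : Sig} (j : ℕ) : FOTerm S → Prop
  | .var i => i = j
  | .fn _ ts => ∃ i, (ts i).freeIn j

/-- Formulas with two kinds of predicate variables, each kind having its own
de Bruijn index space. -/
inductive Form (S : Sig) : Type
  | bot : Form S
  | pr : S.Pr → List (FOTerm S) → Form S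
  | pvar : PK → ℕ → List (FOTerm S) → Form S
  | arr : Form S → Form S → Form S
  | fall : Form S → Form S
  | pall : PK → Form S → Form S

namespace Form

variable {S : Sig}

/-- `¬A = A → ⊥`. -/
def neg (A : Form S) : Form S := arr A bot

def substFO (σ : ℕ → FOTerm S) : Form S → Form S
  | bot => bot
  | pr P ts => pr P (ts.map (FOTerm.subst σ))
  | pvar k X ts => pvar k X (ts.map (FOTerm.subst σ))
  | arr A B => arr (A.substFO σ) (B.substFO σ)
  | fall A => fall (A.substFO (FOTerm.liftSub σ))
  | pall k A => pall k (A.substFO σ)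

/-- `A[u/x]` for the first first-order variable. -/
def substFO0 (A : Form S) (u : FOTerm S) : Form S :=
  A.substFO (fun i => match i with | 0 => u | j+1 => FOTerm.var j)

def shiftFO (A : Form S) : Form S := A.substFO (fun i => FOTerm.var (i+1))

/-- Renaming of the free predicate variables of kind `k`. -/
def rename2 (k : PK) (ρ : ℕ → ℕ) : Form S → Form S
  | bot => bot
  | pr P ts => pr P ts
  | pvar k' X ts => pvar k' (if k' = k then ρ X else X) ts
  | arr A B => arr (A.rename2 k ρ) (B.rename2 k ρ)
  | fall A => fall (A.rename2 k ρ)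
  | pall k' A =>
      pall k' (A.rename2 k
        (if k' = k then (fun i => match i with | 0 => 0 | j+1 => ρ j + 1) else ρ))

def bump (e : PK → ℕ) (k : PK) : PK → ℕ := fun k' => if k' = k then e k' + 1 else e k'

/-- `inst2 k G d e A` : substitution `A[G/X]` for the predicate variable `X`
of kind `k` and de Bruijn index `e k`; `d` counts the crossed first order
binders and `e` the crossed second order binders of each kind. Each atomic
subformula `X(t₁,…,tₘ)` is replaced by `G[t₁/x₁,…,tₘ/xₘ]`. -/
def inst2 (k : PK) (G : Form S) : ℕ → (PK → ℕ) → Form S → Form S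
  | _, _, bot => bot
  | _, _, pr P ts => pr P ts
  | d, e, pvar k' X ts =>
      if k' = k ∧ X = e k then
        ((G.rename2 PK.pl (· + e PK.pl)).rename2 PK.sp (· + e PK.sp)).substFO
          (fun i => if h : i < ts.length then ts.get ⟨i, h⟩
                    else FOTerm.var (i - ts.length + d))
      else pvar k' (if k' = k ∧ e k < X then X - 1 else X) ts
  | d, e, arr A B => arr (inst2 k G d e A) (inst2 k G d e B)
  | d, e, fall A => fall (inst2 k G (d+1) e A)
  | d, e, pall k' A => pall k' (inst2 k G d (bump e k') A)

/-- `A[G/X]` for the first predicate variable of kind `k`. -/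
def inst2_0 (k : PK) (A G : Form S) : Form S := inst2 k G 0 (fun _ => 0) A

/-- The first order variable `x` (de Bruijn index `j`) occurs free in the formula. -/
def freeFO : ℕ → Form S → Prop
  | _, bot => False
  | j, pr _ ts => ∃ u ∈ ts, FOTerm.freeIn j u
  | j, pvar _ _ ts => ∃ u ∈ ts, FOTerm.freeIn j u
  | j, arr A B => freeFO j A ∨ freeFO j B
  | j, fall A => freeFO (j+1) A
  | j, pall _ A => freeFO j A

/-- The predicate variable of kind `k` and index `j` occurs free in the formula. -/
def freeP (k : PK) : ℕ → Form S → Prop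
  | _, bot => False
  | _, pr _ _ => False
  | j, pvar k' X _ => k' = k ∧ X = j
  | j, arr A B => freeP k j A ∨ freeP k j B
  | j, fall A => freeP k j A
  | j, pall k' A => freeP k (if k' = k then j + 1 else j) A

/-- Closed formula : no free first order variable and no free predicate variable. -/
def ClosedF (A : Form S) : Prop :=
  (∀ j, ¬ freeFO j A) ∧ (∀ k j, ¬ freeP k j A)

/-- Formulas of the AF2 type system : no special predicate variable occurs. -/
def Plain : Form S → Prop
  | bot => True
  | pr _ _ => True
  | pvar k _ _ => k = PK.pl
  | arr A B => Plain A ∧ Plain B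
  | fall A => Plain A
  | pall k A => k = PK.pl ∧ Plain A

/-- The formula does not contain `⊥`. -/
def NoBot : Form S → Prop
  | bot => False
  | pr _ _ => True
  | pvar _ _ _ => True
  | arr A B => NoBot A ∧ NoBot B
  | fall A => NoBot A
  | pall _ A => NoBot A

end Form

mutual
/-- `∀`-positive types : the second order quantifier only occurs positively. -/
inductive PosT {S : Sig} : Form S → Prop
  | bot : PosT Form.bot
  | pr (P : S.Pr) (ts : List (FOTerm S)) : PosT (Form.pr P ts)
  | pvar (k : PK) (X : ℕ) (ts : List (FOTerm S)) : PosT (Form.pvar k X ts)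
  | arr {A B : Form S} : NegT A → PosT B → PosT (Form.arr A B)
  | fall {A : Form S} : PosT A → PosT (Form.fall A)
  | pall {A : Form S} : PosT A → PosT (Form.pall PK.pl A)

/-- `∀`-negative types : the second order quantifier only occurs negatively. -/
inductive NegT {S : Sig} : Form S → Prop
  | bot : NegT Form.bot
  | pr (P : S.Pr) (ts : List (FOTerm S)) : NegT (Form.pr P ts)
  | pvar (k : PK) (X : ℕ) (ts : List (FOTerm S)) : NegT (Form.pvar k X ts)
  | arr {A B : Form S} : PosT A → NegT B → NegT (Form.arr A B)
  | fall {A : Form S} : NegT A → NegT (Form.fall A)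
  | pall {A : Form S} : NegT A → ¬ Form.freeP PK.pl 0 A → NegT (Form.pall PK.pl A)
end

/-- Axioms of the equational theory: substitution instances of the equations of `E`. -/
def EqAx {S : Sig} (E : Set (FOTerm S × FOTerm S)) (u v : FOTerm S) : Prop :=
  ∃ p ∈ E, ∃ σ : ℕ → FOTerm S, u = p.1.subst σ ∧ v = p.2.subst σ

/-- `u ≈ v`. -/
def EqE {S : Sig} (E : Set (FOTerm S × FOTerm S)) : FOTerm S → FOTerm S → Prop :=
  Relation.EqvGen (EqAx E)

/- The language of arithmetic: a constant 0 and a unary function symbol s. -/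

inductive NatFn : Type
  | zero : NatFn
  | succ : NatFn

/-- The signature with a constant symbol `0` and a unary function symbol `s`. -/
def NatSig : Sig where
  Fn := NatFn
  arFn := fun f => match f with | .zero => 0 | .succ => 1
  Pr := Empty

/-- The first order term `0`. -/
def zeroT : FOTerm NatSig := .fn NatFn.zero (fun i => i.elim0)

/-- The first order term `s(u)`. -/
def succT (u : FOTerm NatSig) : FOTerm NatSig := .fn NatFn.succ (fun _ => u)

/-- The first order term `sⁿ(0)`. -/
def numT : ℕ → FOTerm NatSig
  | 0 => zeroT
  | n+1 => succT (numT n)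

/-- A set of equations is adequate with the type of integers iff
`s(a) ≉ 0` and `s(a) ≈ s(b)` implies `a ≈ b`. -/
def Adequate (E : Set (FOTerm NatSig × FOTerm NatSig)) : Prop :=
  (∀ a, ¬ EqE E (succT a) zeroT) ∧
  (∀ a b, EqE E (succT a) (succT b) → EqE E a b)


/- The λC-calculus : λ-calculus with an extra constant C. -/

inductive LC : Type
  | var : ℕ → LC
  | app : LC → LC → LC
  | abs : LC → LC
  | cc : LC

namespace LC

def rename (ρ : ℕ → ℕ) : LC → LC
  | var i => var (ρ i)
  | app u v => app (u.rename ρ) (v.rename ρ)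
  | abs u => abs (u.rename (fun i => match i with | 0 => 0 | j+1 => ρ j + 1))
  | cc => cc

def liftSub (σ : ℕ → LC) : ℕ → LC
  | 0 => var 0
  | i+1 => (σ i).rename (· + 1)

def subst (σ : ℕ → LC) : LC → LC
  | var i => σ i
  | app u v => app (u.subst σ) (v.subst σ)
  | abs u => abs (u.subst (liftSub σ))
  | cc => cc

def subst0 (u v : LC) : LC :=
  u.subst (fun i => match i with | 0 => v | j+1 => var j)

/-- One step of β-reduction on λC-terms. -/
inductive Beta : LC → LC → Prop
  | beta (u v : LC) : Beta (app (abs u) v) (u.subst0 v)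
  | appL {u u'} (v) : Beta u u' → Beta (app u v) (app u' v)
  | appR (u) {v v'} : Beta v v' → Beta (app u v) (app u v')
  | abs {u u'} : Beta u u' → Beta (abs u) (abs u')

/-- β-equivalence on λC-terms. -/
def BetaEq : LC → LC → Prop := Relation.EqvGen Beta

def ClosedUnder : ℕ → LC → Prop
  | k, var i => i < k
  | k, app u v => ClosedUnder k u ∧ ClosedUnder k v
  | k, abs u => ClosedUnder (k+1) u
  | _, cc => True

def Closed (t : LC) : Prop := ClosedUnder 0 t

/-- Pure λ-terms : the constant `C` does not occur. -/
def Pure : LC → Prop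
  | var _ => True
  | app u v => Pure u ∧ Pure v
  | abs u => Pure u
  | cc => False

def iterApp (f : LC) : ℕ → LC → LC
  | 0, x => x
  | n+1, x => app f (iterApp f n x)

/-- The Church integer `n̲ = λxλf(f)ⁿx` as a λC-term. -/
def church (n : ℕ) : LC := abs (abs (iterApp (var 0) n (var 1)))

/-- `(t)t₁…tₙ`. -/
def appSpine (t : LC) (ts : List LC) : LC := ts.foldl app t

/-- One step of head C-reduction :
`(λx u)t t₁…tₙ → (u[t/x])t₁…tₙ` and `(C)t t₁…tₙ → (t)λx(x)t₁…tₙ`. -/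
inductive HCStep : LC → LC → Prop
  | beta (u t : LC) (ts : List LC) :
      HCStep (appSpine (app (abs u) t) ts) (appSpine (u.subst0 t) ts)
  | cred (t : LC) (ts : List LC) :
      HCStep (appSpine (app cc t) ts)
        (app t (abs (appSpine (var 0) (ts.map (rename (· + 1))))))

/-- `u ≻_C v`. -/
def HCRed : LC → LC → Prop := Relation.ReflTransGen HCStep

end LC

/-- Classical types : types ending with `⊥` or with a classical variable. -/
inductive EndsClassical {S : Sig} : Form S → Prop
  | bot : EndsClassical Form.bot
  | cvar (X : ℕ) (ts : List (FOTerm S)) : EndsClassical (Form.pvar PK.sp X ts)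
  | arr (A : Form S) {B : Form S} : EndsClassical B → EndsClassical (Form.arr A B)
  | fall {A : Form S} : EndsClassical A → EndsClassical (Form.fall A)
  | pall (k : PK) {A : Form S} : EndsClassical A → EndsClassical (Form.pall k A)

/-- The mixed type system M2 over λC-terms : the rules of AF2 (with ordinary
predicate variables, `PK.pl`), the axiom (0′) `C : ∀X_C{¬¬X_C → X_C}`, and the
rules (6″) and (7″) for classical variables (`PK.sp`), instantiation of a
classical variable being restricted to classical types. -/
inductive M2 (S : Sig) (E : Set (FOTerm S × FOTerm S)) :
    List (Form S) → LC → Form S → Prop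
  | ccAx {Γ : List (Form S)} :
      M2 S E Γ .cc
        (.pall PK.sp (.arr (.arr (.arr (.pvar PK.sp 0 []) .bot) .bot)
          (.pvar PK.sp 0 [])))
  | var {Γ : List (Form S)} {i : ℕ} {A : Form S} :
      Γ[i]? = some A → M2 S E Γ (.var i) A
  | absI {Γ : List (Form S)} {A B : Form S} {t : LC} :
      M2 S E (A :: Γ) t B → M2 S E Γ (.abs t) (.arr A B)
  | appE {Γ : List (Form S)} {A B : Form S} {u v : LC} :
      M2 S E Γ u (.arr A B) → M2 S E Γ v A → M2 S E Γ (.app u v) B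
  | fallI {Γ : List (Form S)} {t : LC} {A : Form S} :
      M2 S E (Γ.map Form.shiftFO) t A → M2 S E Γ t (.fall A)
  | fallE {Γ : List (Form S)} {t : LC} {A : Form S} (u : FOTerm S) :
      M2 S E Γ t (.fall A) → M2 S E Γ t (A.substFO0 u)
  | pallI {Γ : List (Form S)} {t : LC} {A : Form S} :
      M2 S E (Γ.map (Form.rename2 PK.pl (· + 1))) t A → M2 S E Γ t (.pall PK.pl A)
  | pallE {Γ : List (Form S)} {t : LC} {A : Form S} (G : Form S) :
      M2 S E Γ t (.pall PK.pl A) → M2 S E Γ t (Form.inst2_0 PK.pl A G)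
  | eqE {Γ : List (Form S)} {t : LC} {A : Form S} {u v : FOTerm S} :
      M2 S E Γ t (A.substFO0 u) → EqE E u v → M2 S E Γ t (A.substFO0 v)
  | pallIC {Γ : List (Form S)} {t : LC} {A : Form S} :
      M2 S E (Γ.map (Form.rename2 PK.sp (· + 1))) t A → M2 S E Γ t (.pall PK.sp A)
  | pallEC {Γ : List (Form S)} {t : LC} {A : Form S} (G : Form S) :
      EndsClassical G → M2 S E Γ t (.pall PK.sp A) →
      M2 S E Γ t (Form.inst2_0 PK.sp A G)

/-- The type of integers `N[u]` (resp. its translation `N^C[u]`), built with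
predicate variables of kind `k`. -/
def NFormK (k : PK) (u : FOTerm NatSig) : Form NatSig :=
  .pall k (.arr (.pvar k 0 [zeroT])
    (.arr (.fall (.arr (.pvar k 0 [FOTerm.var 0]) (.pvar k 0 [succT (FOTerm.var 0)])))
      (.pvar k 0 [u])))

/-- The type `∀x{N^C[x] → ¬¬N[x]}`. -/
def storTypeC : Form NatSig :=
  .fall (.arr (NFormK PK.sp (FOTerm.var 0))
    (Form.neg (Form.neg (NFormK PK.pl (FOTerm.var 0)))))

/-!
The proof uses realizability twice, a type being interpreted by terms whose behaviour is measured
against a set of terms closed under head C-expansion (a *pole*), and classical variables by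
orthogonals of sets of stacks.

First, run `(T)νf` with `ν` a variable standing for an unknown integer of value `n`. Whenever
`(ν)ab` comes to the head it is replaced by a fresh variable naming the iteration `bⁿa`, and when a
name for `bʲ⁺¹a` comes to the head it is replaced by `b` applied to a fresh name for `bʲa`. The
terms whose run halts on some `(f)τ` with `τ ≃β n̲` form a pole in which `ν` realizes the type of
classical integers of value `n`; by adequacy `(T)νf` belongs to it, which yields a `τ` independent
of `θ`.

Second, let `θ` be a classical integer of value `n`. It realizes its type in the pole of the terms
that reduce to `(f)σ(τ)` for some `σ`. Follow the run of `(T)νf` with `θ` in place of `ν`: each name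
for `bʲa` receives as its value a term orthogonal to the stacks that this name meets later in the
run. For the name introduced at `(ν)ab` this value is `(θ)ab`, which is legitimate because `a` and
`b` satisfy the induction hypotheses on these stacks. The number of remaining steps is what makes
the definition of these stacks well founded.
-/

open Function (update)
open Relation (ReflTransGen)

/-- The sequence `x, s 0, s 1, …`. It serves as the extension of a substitution, of a first-order
environment or of a predicate valuation by a value for the de Bruijn index `0`. -/
def scons {α : Type*} (x : α) (s : ℕ → α) : ℕ → α
  | 0 => x
  | j + 1 => s j

@[simp] theorem scons_zero {α : Type*} (x : α) (s : ℕ → α) : scons x s 0 = x := rfl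

@[simp] theorem scons_succ {α : Type*} (x : α) (s : ℕ → α) (j : ℕ) : scons x s (j + 1) = s j := rfl

/-- The lifting of a renaming of de Bruijn indices under a binder. -/
def liftRen (r : ℕ → ℕ) : ℕ → ℕ := scons 0 fun j => r j + 1

namespace LC

section Substitution

theorem rename_abs (r : ℕ → ℕ) (u : LC) : (abs u).rename r = abs (u.rename (liftRen r)) := by
  simp only [rename]
  rfl

theorem subst0_eq (u v : LC) : u.subst0 v = u.subst (scons v var) := by
  simp only [subst0]
  rfl

theorem rename_rename (t : LC) (r s : ℕ → ℕ) :
    (t.rename r).rename s = t.rename (s ∘ r) := by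
  induction t generalizing r s with
  | var i => rfl
  | app u v ihu ihv => simp only [rename, ihu, ihv]
  | abs u ih =>
    simp only [rename_abs, ih]
    congr 2
    funext i
    cases i <;> rfl
  | cc => rfl

theorem subst_rename (t : LC) (r : ℕ → ℕ) (σ : ℕ → LC) :
    (t.rename r).subst σ = t.subst (σ ∘ r) := by
  induction t generalizing r σ with
  | var i => rfl
  | app u v ihu ihv => simp only [rename, subst, ihu, ihv]
  | abs u ih =>
    simp only [rename_abs, subst, ih]
    congr 2
    funext i
    cases i <;> rfl
  | cc => rfl

theorem rename_subst (t : LC) (σ : ℕ → LC) (r : ℕ → ℕ) :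
    (t.subst σ).rename r = t.subst fun i => (σ i).rename r := by
  induction t generalizing r σ with
  | var i => rfl
  | app u v ihu ihv => simp only [rename, subst, ihu, ihv]
  | abs u ih =>
    simp only [rename_abs, subst, ih]
    congr 2
    funext i
    cases i with
    | zero => rfl
    | succ j => exact (rename_rename (σ j) _ _).trans (rename_rename (σ j) r _).symm
  | cc => rfl

theorem subst_subst (t : LC) (σ σ' : ℕ → LC) :
    (t.subst σ).subst σ' = t.subst fun i => (σ i).subst σ' := by
  induction t generalizing σ σ' with
  | var i => rfl
  | app u v ihu ihv => simp only [subst, ihu, ihv]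
  | abs u ih =>
    simp only [subst, ih]
    congr 2
    funext i
    cases i with
    | zero => rfl
    | succ j => exact (subst_rename _ _ _).trans (rename_subst _ _ _).symm
  | cc => rfl

theorem subst_var (t : LC) : t.subst var = t := by
  induction t with
  | var i => rfl
  | app u v ihu ihv => simp only [subst, ihu, ihv]
  | abs u ih =>
    have liftSub_var : liftSub var = var := by
      funext i
      cases i <;> rfl
    simp only [subst, liftSub_var, ih]
  | cc => rfl

theorem subst_liftSub_subst0 (u v : LC) (σ : ℕ → LC) :
    (u.subst (liftSub σ)).subst0 v = u.subst (scons v σ) := by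
  rw [subst0_eq, subst_subst]
  congr 1
  funext i
  cases i with
  | zero => rfl
  | succ j => exact (subst_rename _ _ _).trans (subst_var _)

theorem subst0_subst (u v : LC) (σ : ℕ → LC) :
    (u.subst0 v).subst σ = (u.subst (liftSub σ)).subst0 (v.subst σ) := by
  rw [subst_liftSub_subst0, subst0_eq, subst_subst]
  congr 1
  funext i
  cases i <;> rfl

theorem subst0_rename (u v : LC) (r : ℕ → ℕ) :
    (u.subst0 v).rename r = (u.rename (liftRen r)).subst0 (v.rename r) := by
  rw [subst0_eq, subst0_eq, rename_subst, subst_rename]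
  congr 1
  funext i
  cases i <;> rfl

theorem appSpine_append (t : LC) (π π' : List LC) :
    appSpine t (π ++ π') = appSpine (appSpine t π) π' :=
  List.foldl_append

theorem appSpine_subst (t : LC) (π : List LC) (σ : ℕ → LC) :
    (appSpine t π).subst σ = appSpine (t.subst σ) (π.map (subst σ)) := by
  induction π generalizing t with
  | nil => rfl
  | cons a _ ih => exact ih (app t a)

end Substitution

section Reduction

/-- `BetaRed t u`: the term `t` reduces to `u` by finitely many β-steps. -/
abbrev BetaRed : LC → LC → Prop := ReflTransGen Beta

theorem HCStep.subst {t t' : LC} (h : HCStep t t') (σ : ℕ → LC) :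
    HCStep (t.subst σ) (t'.subst σ) := by
  cases h with
  | beta u t =>
    rw [appSpine_subst, appSpine_subst, subst0_subst]
    exact .beta _ _ _
  | cred t π =>
    have shift_subst (a : LC) :
        (a.rename (· + 1)).subst (liftSub σ) = (a.subst σ).rename (· + 1) :=
      (subst_rename _ _ _).trans (rename_subst _ _ _).symm
    simpa only [appSpine_subst, LC.subst, liftSub, List.map_map, Function.comp_def,
      shift_subst] using HCStep.cred (t.subst σ) (π.map (LC.subst σ))

theorem Beta.rename {t t' : LC} (h : Beta t t') (r : ℕ → ℕ) :
    Beta (t.rename r) (t'.rename r) := by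
  induction h generalizing r with
  | beta u v =>
    rw [subst0_rename]
    exact .beta _ _
  | appL v _ ih => exact .appL _ (ih r)
  | appR u _ ih => exact .appR _ (ih r)
  | abs _ ih =>
    rw [rename_abs, rename_abs]
    exact .abs (ih _)

theorem Beta.appSpine {t t' : LC} (h : Beta t t') (π : List LC) :
    Beta (appSpine t π) (appSpine t' π) := by
  induction π generalizing t t' with
  | nil => exact h
  | cons a _ ih => exact ih (.appL a h)

theorem BetaRed.betaEq {t u : LC} (h : BetaRed t u) : BetaEq t u := by
  induction h with
  | refl => exact .refl _
  | tail _ step ih => exact .trans _ _ _ ih (.rel _ _ step)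

theorem BetaRed.appR (t : LC) {u v : LC} (h : BetaRed u v) : BetaRed (app t u) (app t v) :=
  h.lift (app t) fun _ _ => .appR t

end Reduction

section FreeVariables

/-- The set of free variables of a term, as de Bruijn indices. -/
def freeVars : LC → Set ℕ
  | var i => {i}
  | app u v => u.freeVars ∪ v.freeVars
  | abs u => Nat.succ ⁻¹' u.freeVars
  | cc => ∅

theorem finite_freeVars (t : LC) : t.freeVars.Finite := by
  induction t with
  | var i => exact Set.finite_singleton i
  | app u v ihu ihv => exact ihu.union ihv
  | abs u ih => exact ih.preimage Nat.succ_injective.injOn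
  | cc => exact Set.finite_empty

theorem freeVars_rename (t : LC) (r : ℕ → ℕ) : (t.rename r).freeVars = r '' t.freeVars := by
  induction t generalizing r with
  | var i => exact Set.image_singleton.symm
  | app u v ihu ihv => simp only [rename, freeVars, ihu, ihv, Set.image_union]
  | abs u ih =>
    ext i
    simp only [rename_abs, freeVars, ih, Set.mem_preimage, Set.mem_image]
    constructor
    · rintro ⟨_ | j, hj, hji⟩
      · cases hji
      · exact ⟨j, hj, Nat.succ_injective hji⟩
    · rintro ⟨j, hj, rfl⟩
      exact ⟨j + 1, hj, rfl⟩
  | cc => exact (Set.image_empty r).symm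

theorem freeVars_subst (t : LC) (σ : ℕ → LC) :
    (t.subst σ).freeVars = ⋃ i ∈ t.freeVars, (σ i).freeVars := by
  induction t generalizing σ with
  | var i => exact (Set.biUnion_singleton i fun j => (σ j).freeVars).symm
  | app u v ihu ihv => simp only [subst, freeVars, ihu, ihv, Set.biUnion_union]
  | abs u ih =>
    have freeVars_liftSub_succ (j : ℕ) :
        (liftSub σ (j + 1)).freeVars = Nat.succ '' (σ j).freeVars :=
      freeVars_rename _ _
    ext i
    simp only [subst, freeVars, ih, Set.mem_preimage, Set.mem_iUnion, exists_prop]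
    constructor
    · rintro ⟨_ | j, hj, hi⟩
      · cases hi
      · rw [freeVars_liftSub_succ] at hi
        exact ⟨j, hj, (Nat.succ_injective.mem_set_image).1 hi⟩
    · rintro ⟨j, hj, hi⟩
      refine ⟨j + 1, hj, ?_⟩
      rw [freeVars_liftSub_succ]
      exact Set.mem_image_of_mem _ hi
  | cc => exact Set.biUnion_empty _ |>.symm

theorem subst_congr {t : LC} {σ σ' : ℕ → LC} (h : Set.EqOn σ σ' t.freeVars) :
    t.subst σ = t.subst σ' := by
  induction t generalizing σ σ' with
  | var i => exact h rfl
  | app u v ihu ihv =>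
    simp only [subst, ihu (h.mono Set.subset_union_left), ihv (h.mono Set.subset_union_right)]
  | abs u ih =>
    refine congrArg abs (ih ?_)
    rintro (_ | j) hj
    · rfl
    · exact congrArg (rename (· + 1)) (h hj)
  | cc => rfl

theorem subst_eq_self {t : LC} (h : t.freeVars = ∅) (σ : ℕ → LC) : t.subst σ = t := by
  rw [subst_congr (h ▸ Set.eqOn_empty σ var), subst_var]

theorem freeVars_subst0_subset (u v : LC) :
    (u.subst0 v).freeVars ⊆ (app (abs u) v).freeVars := by
  rw [subst0_eq, freeVars_subst]
  refine Set.iUnion₂_subset ?_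
  rintro (_ | j) hj i hi
  · exact .inr hi
  · obtain rfl : i = j := hi
    exact .inl hj

theorem freeVars_appSpine (t : LC) (π : List LC) :
    (appSpine t π).freeVars = t.freeVars ∪ ⋃ a ∈ π, a.freeVars := by
  induction π generalizing t with
  | nil => simp [appSpine]
  | cons a π ih =>
    refine (ih (app t a)).trans ?_
    simp only [freeVars, List.mem_cons, Set.iUnion_iUnion_eq_or_left, Set.union_assoc]

theorem HCStep.freeVars_subset {t t' : LC} (h : HCStep t t') : t'.freeVars ⊆ t.freeVars := by
  cases h with
  | beta u t =>
    rw [freeVars_appSpine, freeVars_appSpine]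
    exact Set.union_subset_union_left _ (freeVars_subst0_subset u t)
  | cred t π =>
    rw [freeVars_appSpine]
    refine Set.union_subset_union Set.subset_union_right fun i hi => ?_
    simp only [freeVars, freeVars_appSpine, List.mem_map, Set.iUnion_exists, Set.biUnion_and',
      Set.iUnion_iUnion_eq_right, freeVars_rename] at hi
    rcases hi with hi | hi
    · cases hi
    · simpa using hi

theorem Beta.freeVars_subset {t t' : LC} (h : Beta t t') : t'.freeVars ⊆ t.freeVars := by
  induction h with
  | beta u v => exact freeVars_subst0_subset u v
  | appL v _ ih => exact Set.union_subset_union_left _ ih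
  | appR u _ ih => exact Set.union_subset_union_right _ ih
  | abs _ ih => exact Set.preimage_mono ih

theorem BetaRed.freeVars_subset {t t' : LC} (h : BetaRed t t') : t'.freeVars ⊆ t.freeVars := by
  induction h with
  | refl => exact subset_rfl
  | tail _ step ih => exact step.freeVars_subset.trans ih

end FreeVariables

section ChurchNumerals

/-- `lam x t` is the abstraction `λx t` of the free variable `x` of `t`: the index `x` becomes `0`
and every other free variable is shifted. -/
def lam (x : ℕ) (t : LC) : LC := abs (t.rename fun i => if i = x then 0 else i + 1)

theorem lam_subst0_var {x : ℕ} {u : LC} (hx : x ∉ (abs u).freeVars) :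
    lam x (u.subst0 (var x)) = abs u := by
  rw [lam, subst0_eq, rename_subst]
  refine congrArg abs ((subst_congr ?_).trans (subst_var u))
  rintro (_ | j) hj
  · exact congrArg var (if_pos rfl)
  · exact congrArg var (if_neg fun hjx : j = x => hx (hjx ▸ hj))

theorem Beta.lam {t t' : LC} (h : Beta t t') (x : ℕ) : Beta (lam x t) (lam x t') :=
  .abs (h.rename _)

theorem BetaRed.of_app_var {x : ℕ} {t v : LC} (hx : x ∉ t.freeVars)
    (h : BetaRed (app t (var x)) v) :
    (∃ u, BetaRed t u ∧ v = app u (var x)) ∨ BetaRed t (lam x v) := by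
  induction h with
  | refl => exact .inl ⟨t, .refl, rfl⟩
  | tail _ step ih =>
    rcases ih with ⟨u, htu, rfl⟩ | hlam
    · cases step with
      | beta w =>
        exact .inr (by rwa [lam_subst0_var fun hxw => hx (htu.freeVars_subset hxw)])
      | appL _ step' => exact .inl ⟨_, htu.tail step', rfl⟩
      | appR _ step' => cases step'
    · exact .inr (hlam.tail (step.lam x))

theorem iterApp_rename (f t : LC) (n : ℕ) (r : ℕ → ℕ) :
    (iterApp f n t).rename r = iterApp (f.rename r) n (t.rename r) := by
  induction n with
  | zero => rfl
  | succ n ih => simp only [iterApp, rename, ih]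

theorem lam_lam_iterApp {x g : ℕ} (hgx : g ≠ x) (n : ℕ) :
    lam x (lam g (iterApp (var g) n (var x))) = church n := by
  simp only [lam, iterApp_rename, rename_abs, rename, church, liftRen, if_true, if_neg hgx.symm,
    scons_zero, scons_succ]

theorem iterApp_var_ne_app_var {x g : ℕ} (hgx : g ≠ x) (n : ℕ) (u : LC) :
    iterApp (var g) n (var x) ≠ app u (var g) := by
  rintro h
  rcases n with _ | _ | n
  · cases h
  · exact hgx (by injection h with _ h; injection h with h; exact h.symm)
  · cases h

theorem betaEq_church {x g : ℕ} {t : LC} {n : ℕ} (hx : x ∉ t.freeVars) (hg : g ∉ t.freeVars)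
    (hgx : g ≠ x) (h : BetaRed (app (app t (var x)) (var g)) (iterApp (var g) n (var x))) :
    BetaEq t (church n) := by
  have hg' : g ∉ (app t (var x)).freeVars := fun hmem => hmem.elim hg hgx
  rcases h.of_app_var hg' with ⟨u, -, hu⟩ | h
  · exact absurd hu (iterApp_var_ne_app_var hgx n u)
  · rcases h.of_app_var hx with ⟨u, -, hu⟩ | h
    · cases hu
    · exact lam_lam_iterApp hgx n ▸ h.betaEq

end ChurchNumerals

end LC

theorem M2.freeVars_subset {S : Sig} {E : Set (FOTerm S × FOTerm S)} {Γ : List (Form S)} {t : LC}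
    {A : Form S} (h : M2 S E Γ t A) : t.freeVars ⊆ Set.Iio Γ.length := by
  induction h with
  | ccAx => exact Set.empty_subset _
  | var hi => exact Set.singleton_subset_iff.2 (List.getElem?_eq_some_iff.1 hi).1
  | absI _ ih => exact fun i hi => Nat.lt_of_succ_lt_succ (ih hi)
  | appE _ _ ihu ihv => exact Set.union_subset ihu ihv
  | fallI _ ih | pallI _ ih | pallIC _ ih => simpa only [List.length_map] using ih
  | fallE _ _ ih | pallE _ _ ih | eqE _ _ ih | pallEC _ _ _ ih => exact ih

theorem M2.freeVars_eq_empty {S : Sig} {E : Set (FOTerm S × FOTerm S)} {t : LC} {A : Form S}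
    (h : M2 S E [] t A) : t.freeVars = ∅ :=
  Set.eq_empty_of_forall_notMem fun i hi => Nat.not_lt_zero i (h.freeVars_subset hi)

section FirstOrderSemantics

variable {S : Sig} {M : Type*} (I : (f : S.Fn) → (Fin (S.arFn f) → M) → M)

/-- The value of a first-order term when `I` interprets the function symbols and `ρ` the
variables. -/
def FOTerm.eval (ρ : ℕ → M) : FOTerm S → M
  | .var i => ρ i
  | .fn f ts => I f fun i => (ts i).eval ρ

theorem FOTerm.eval_rename (r : ℕ → ℕ) (ρ : ℕ → M) (t : FOTerm S) :
    (t.rename r).eval I ρ = t.eval I (ρ ∘ r) := by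
  induction t with
  | var i => rfl
  | fn f ts ih => simp only [rename, eval, ih]

theorem FOTerm.eval_subst (σ : ℕ → FOTerm S) (ρ : ℕ → M) (t : FOTerm S) :
    (t.subst σ).eval I ρ = t.eval I fun i => (σ i).eval I ρ := by
  induction t with
  | var i => rfl
  | fn f ts ih => simp only [subst, eval, ih]

/-- The interpretation `I` is a model of the set of equations `E`. -/
def Models (E : Set (FOTerm S × FOTerm S)) : Prop :=
  ∀ p ∈ E, ∀ ρ : ℕ → M, p.1.eval I ρ = p.2.eval I ρ

theorem Models.eval_eq_of_eqE {E : Set (FOTerm S × FOTerm S)} (hE : Models I E) {u v : FOTerm S}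
    (h : EqE E u v) (ρ : ℕ → M) : u.eval I ρ = v.eval I ρ := by
  induction h with
  | rel _ _ h =>
    obtain ⟨p, hp, σ, rfl, rfl⟩ := h
    rw [FOTerm.eval_subst, FOTerm.eval_subst, hE p hp]
  | refl => rfl
  | symm _ _ _ ih => exact ih.symm
  | trans _ _ _ _ _ ih₁ ih₂ => exact ih₁.trans ih₂

end FirstOrderSemantics

namespace LC

section Orthogonality

/-- A pole for a realizability interpretation: a set of terms closed under expansion for head
`C`-reduction. -/
def IsPole (pole : Set LC) : Prop := ∀ ⦃t t'⦄, HCStep t t' → t' ∈ pole → t ∈ pole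

/-- The terms that fall into the pole when applied to any stack of arguments in `P`. -/
def orth (pole : Set LC) (P : Set (List LC)) : Set LC := {t | ∀ π ∈ P, appSpine t π ∈ pole}

/-- A set of terms is saturated if it is closed under expansion of a head β-redex; these sets
interpret the ordinary predicate variables. -/
def Saturated (F : Set LC) : Prop :=
  ∀ u t π, appSpine (u.subst0 t) π ∈ F → appSpine (app (abs u) t) π ∈ F

variable {pole : Set LC}

theorem orth_antitone : Antitone (orth pole) := fun _ _ h _ ht π hπ => ht π (h hπ)

theorem orth_singleton_nil : orth pole {[]} = pole :=
  Set.ext fun _ => forall_eq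

theorem orth_iUnion {ι : Sort*} (P : ι → Set (List LC)) :
    orth pole (⋃ i, P i) = ⋂ i, orth pole (P i) := by
  ext t
  simp only [orth, Set.mem_iUnion, Set.mem_iInter, Set.mem_ofPred_eq]
  exact ⟨fun h i π hπ => h π ⟨i, hπ⟩, fun h π ⟨i, hπ⟩ => h i π hπ⟩

theorem orth_image2_cons (F : Set LC) (P : Set (List LC)) :
    orth pole (Set.image2 List.cons F P) = {t | ∀ u ∈ F, app t u ∈ orth pole P} :=
  Set.ext fun _ => Set.forall_mem_image2

theorem saturated_orth (hp : IsPole pole) (P : Set (List LC)) : Saturated (orth pole P) := by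
  intro u t π h π' hπ'
  rw [← appSpine_append]
  refine hp (.beta u t _) ?_
  rw [appSpine_append]
  exact h π' hπ'

theorem IsPole.saturated (hp : IsPole pole) : Saturated pole := fun u t π => hp (.beta u t π)

theorem subst0_appSpine_var_zero (v : LC) (π : List LC) :
    (appSpine (var 0) (π.map (rename (· + 1)))).subst0 v = appSpine v π := by
  have subst_rename_succ (a : LC) : (a.rename (· + 1)).subst (scons v var) = a :=
    (subst_rename _ _ _).trans (subst_var a)
  simp only [subst0_eq, appSpine_subst, subst, scons_zero, List.map_map, Function.comp_def,
    subst_rename_succ, List.map_id']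

theorem app_cc_mem_orth (hp : IsPole pole) {P : Set (List LC)} {u : LC}
    (hu : ∀ v, (∀ w ∈ orth pole P, app v w ∈ pole) → app u v ∈ pole) :
    app cc u ∈ orth pole P := by
  intro π hπ
  refine hp (.cred u π) (hu _ fun w hw => hp (.beta _ w []) ?_)
  rw [subst0_appSpine_var_zero]
  exact hw π hπ

end Orthogonality

end LC

section Realizability

open LC

/-- Interpretations of the predicate variables of both kinds, a predicate over `M` being a family
of sets of terms indexed by the tuples of its arguments. -/
abbrev PredEnv (M : Type*) : Type _ := PK → ℕ → List M → Set LC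

/-- The valuation `V` with the predicate `F` inserted in front of the variables of kind `k`. -/
def PredEnv.push {M : Type*} (k : PK) (F : List M → Set LC) (V : PredEnv M) : PredEnv M :=
  update V k (scons F (V k))

/-- The predicates over which the variables of a given kind range: families of saturated sets for
ordinary variables, families of orthogonals of sets of stacks for classical ones. -/
def Admissible {M : Type*} (pole : Set LC) : PK → (List M → Set LC) → Prop
  | .pl, F => ∀ l, Saturated (F l)
  | .sp, F => ∀ l, ∃ P, F l = orth pole P

variable {S : Sig} {M : Type*} (I : (f : S.Fn) → (Fin (S.arFn f) → M) → M) (pole : Set LC)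

/-- The set of terms realizing a formula. -/
def Form.realizers : Form S → (ℕ → M) → PredEnv M → Set LC
  | .bot, _, _ => pole
  | .pr _ _, _, _ => Set.univ
  | .pvar k X ts, ρ, V => V k X (ts.map (FOTerm.eval I ρ))
  | .arr A B, ρ, V => {t | ∀ u ∈ A.realizers ρ V, app t u ∈ B.realizers ρ V}
  | .fall A, ρ, V => {t | ∀ x : M, t ∈ A.realizers (scons x ρ) V}
  | .pall k A, ρ, V => {t | ∀ F, Admissible pole k F → t ∈ A.realizers ρ (V.push k F)}

section Substitution

variable {pole}

theorem realizers_substFO (A : Form S) (σ : ℕ → FOTerm S) (ρ : ℕ → M) (V : PredEnv M) :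
    (A.substFO σ).realizers I pole ρ V = A.realizers I pole (fun i => (σ i).eval I ρ) V := by
  induction A generalizing σ ρ V with
  | bot | pr => rfl
  | pvar k X ts =>
    simp only [Form.substFO, Form.realizers, List.map_map, Function.comp_def, FOTerm.eval_subst]
  | arr A B ihA ihB => simp only [Form.substFO, Form.realizers, ihA, ihB]
  | fall A ih =>
    have eval_liftSub (x : M) :
        (fun i => (FOTerm.liftSub σ i).eval I (scons x ρ)) = scons x fun i => (σ i).eval I ρ := by
      funext i
      cases i with
      | zero => rfl
      | succ j => exact FOTerm.eval_rename I _ _ _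
    simp only [Form.substFO, Form.realizers, ih, eval_liftSub]
  | pall k A ih => simp only [Form.substFO, Form.realizers, ih]

theorem realizers_substFO0 (A : Form S) (u : FOTerm S) (ρ : ℕ → M) (V : PredEnv M) :
    (A.substFO0 u).realizers I pole ρ V = A.realizers I pole (scons (u.eval I ρ) ρ) V := by
  rw [Form.substFO0, realizers_substFO]
  congr 1
  funext i
  cases i <;> rfl

theorem realizers_shiftFO (A : Form S) (x : M) (ρ : ℕ → M) (V : PredEnv M) :
    A.shiftFO.realizers I pole (scons x ρ) V = A.realizers I pole ρ V :=
  realizers_substFO I A _ _ V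

theorem Form.rename2_pall (k k' : PK) (r : ℕ → ℕ) (A : Form S) :
    (Form.pall k' A).rename2 k r = .pall k' (A.rename2 k (if k' = k then liftRen r else r)) := by
  simp only [rename2]
  rfl

theorem realizers_rename2 (k : PK) (A : Form S) (r : ℕ → ℕ) (ρ : ℕ → M) (V : PredEnv M) :
    (A.rename2 k r).realizers I pole ρ V = A.realizers I pole ρ (update V k (V k ∘ r)) := by
  induction A generalizing r ρ V with
  | bot | pr => rfl
  | pvar k' X ts =>
    by_cases hk : k' = k
    · subst hk
      simp [Form.rename2, Form.realizers]
    · simp [Form.rename2, Form.realizers, hk]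
  | arr A B ihA ihB => simp only [Form.rename2, Form.realizers, ihA, ihB]
  | fall A ih => simp only [Form.rename2, Form.realizers, ih]
  | pall k' A ih =>
    simp only [Form.rename2_pall, Form.realizers, ih, PredEnv.push]
    by_cases hk : k' = k
    · subst hk
      have scons_comp_liftRen (F : List M → Set LC) (s : ℕ → List M → Set LC) :
          scons F s ∘ liftRen r = scons F (s ∘ r) := by
        funext i
        cases i <;> rfl
      simp only [if_true, Function.update_self, Function.update_idem, scons_comp_liftRen]
    · simp only [hk, if_false, Function.update_of_ne hk, Function.update_of_ne (Ne.symm hk),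
        Function.update_comm hk]

theorem realizers_rename2_succ_push (k : PK) (A : Form S) (F : List M → Set LC) (ρ : ℕ → M)
    (V : PredEnv M) :
    (A.rename2 k (· + 1)).realizers I pole ρ (V.push k F) = A.realizers I pole ρ V := by
  rw [realizers_rename2, PredEnv.push, Function.update_idem, Function.update_self]
  congr 1
  exact Function.update_eq_self k V

/-- The sequence `s` with `x` inserted at position `n`. -/
def insertAt {α : Type*} (n : ℕ) (x : α) (s : ℕ → α) : ℕ → α :=
  fun X => if X = n then x else if n < X then s (X - 1) else s X

theorem insertAt_zero {α : Type*} (x : α) (s : ℕ → α) : insertAt 0 x s = scons x s := by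
  funext X
  cases X <;> rfl

theorem insertAt_succ_scons {α : Type*} (n : ℕ) (x y : α) (s : ℕ → α) :
    insertAt (n + 1) x (scons y s) = scons y (insertAt n x s) := by
  funext X
  rcases X with _ | _ | X
  · rfl
  · simp only [insertAt, Nat.add_right_cancel_iff, Nat.add_lt_add_iff_right, Nat.not_lt_zero,
      if_false, scons_succ]
  · simp only [insertAt, Nat.add_right_cancel_iff, Nat.add_lt_add_iff_right, scons_succ,
      Nat.add_sub_cancel]

/-- The environment starting with the list `l` and continuing as `ρ`. -/
def appendEnv (l : List M) (ρ : ℕ → M) : ℕ → M :=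
  fun i => if h : i < l.length then l.get ⟨i, h⟩ else ρ (i - l.length)

variable (pole) in
/-- The predicate defined by the formula `G`, whose first variables are its arguments. -/
def comprehension (G : Form S) (ρ : ℕ → M) (V : PredEnv M) : List M → Set LC :=
  fun l => G.realizers I pole (appendEnv l ρ) V

theorem realizers_inst2 (k : PK) (G A : Form S) (d : ℕ) (e : PK → ℕ) (ρ : ℕ → M)
    (V : PredEnv M) :
    (Form.inst2 k G d e A).realizers I pole ρ V =
      A.realizers I pole ρ (update V k (insertAt (e k)
        (comprehension I pole G (fun i => ρ (i + d)) fun k' X => V k' (X + e k')) (V k))) := by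
  induction A generalizing d e ρ V with
  | bot | pr => rfl
  | pvar k' X ts =>
    by_cases h : k' = k ∧ X = e k
    · obtain ⟨rfl, rfl⟩ := h
      have eval_get (i : ℕ) :
          (if h : i < ts.length then ts.get ⟨i, h⟩ else .var (i - ts.length + d)).eval I ρ =
            appendEnv (ts.map (FOTerm.eval I ρ)) (fun i => ρ (i + d)) i := by
        by_cases hi : i < ts.length <;> simp [appendEnv, hi, FOTerm.eval]
      simp only [Form.inst2, and_self, if_true, realizers_substFO, realizers_rename2,
        Form.realizers, Function.update_self, insertAt, comprehension, eval_get]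
      congr 1
      funext k X
      cases k <;> simp [update]
    · rw [Form.inst2, if_neg h]
      by_cases hk : k' = k
      · subst hk
        have hX : X ≠ e k' := fun hX => h ⟨rfl, hX⟩
        simp only [Form.realizers, Function.update_self, insertAt, if_neg hX, true_and]
        split_ifs <;> rfl
      · simp only [Form.realizers, Function.update_of_ne hk, hk, false_and, if_false]
  | arr A B ihA ihB => simp only [Form.inst2, Form.realizers, ihA, ihB]
  | fall A ih =>
    simp only [Form.inst2, Form.realizers, ih]
    rfl
  | pall k' A ih =>
    have push_add_bump (H : List M → Set LC) :
        (fun k'' X => V.push k' H k'' (X + Form.bump e k' k'')) =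
          fun k'' X => V k'' (X + e k'') := by
      funext k'' X
      by_cases hk : k'' = k'
      · subst hk
        simp only [PredEnv.push, Form.bump, Function.update_self, if_true, ← add_assoc,
          scons_succ]
      · simp only [PredEnv.push, Form.bump, Function.update_of_ne hk, if_neg hk]
    simp only [Form.inst2, Form.realizers, ih, push_add_bump]
    by_cases hk : k = k'
    · subst hk
      simp only [PredEnv.push, Form.bump, Function.update_self, if_true, Function.update_idem,
        insertAt_succ_scons]
    · simp only [PredEnv.push, Form.bump, Function.update_of_ne hk,
        Function.update_of_ne (Ne.symm hk), if_neg hk, Function.update_comm hk]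

theorem realizers_inst2_0 (k : PK) (A G : Form S) (ρ : ℕ → M) (V : PredEnv M) :
    (Form.inst2_0 k A G).realizers I pole ρ V =
      A.realizers I pole ρ (V.push k (comprehension I pole G ρ V)) := by
  rw [Form.inst2_0, realizers_inst2, insertAt_zero]
  rfl

end Substitution

section Adequacy

variable {pole}

/-- Every predicate variable is interpreted by an admissible predicate. -/
def PredEnv.IsAdmissible (pole : Set LC) (V : PredEnv M) : Prop := ∀ k X, Admissible pole k (V k X)

theorem PredEnv.IsAdmissible.push {k : PK} {F : List M → Set LC} {V : PredEnv M}
    (hV : V.IsAdmissible pole) (hF : Admissible pole k F) : (V.push k F).IsAdmissible pole := by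
  intro k' X
  by_cases hk : k' = k
  · subst hk
    rw [PredEnv.push, Function.update_self]
    cases X with
    | zero => exact hF
    | succ X => exact hV k' X
  · rw [PredEnv.push, Function.update_of_ne hk]
    exact hV k' X

theorem Admissible.saturated (hp : IsPole pole) {k : PK} {F : List M → Set LC}
    (hF : Admissible pole k F) (l : List M) : Saturated (F l) := by
  cases k with
  | pl => exact hF l
  | sp =>
    obtain ⟨P, hP⟩ := hF l
    exact hP ▸ saturated_orth hp P

theorem saturated_realizers (hp : IsPole pole) (A : Form S) (ρ : ℕ → M) {V : PredEnv M}
    (hV : V.IsAdmissible pole) : Saturated (A.realizers I pole ρ V) := by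
  induction A generalizing ρ V with
  | bot => exact hp.saturated
  | pr => exact fun _ _ _ _ => trivial
  | pvar k X ts => exact (hV k X).saturated hp _
  | arr A B _ ihB =>
    intro u t π h v hv
    have hB := ihB ρ hV u t (π ++ [v])
    rw [appSpine_append, appSpine_append] at hB
    exact hB (h v hv)
  | fall A ih => exact fun u t π h x => ih _ hV u t π (h x)
  | pall k A ih => exact fun u t π h F hF => ih ρ (hV.push hF) u t π (h F hF)

theorem EndsClassical.realizers_eq_orth {A : Form S} (hA : EndsClassical A) (ρ : ℕ → M)
    {V : PredEnv M} (hV : V.IsAdmissible pole) : ∃ P, A.realizers I pole ρ V = orth pole P := by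
  induction hA generalizing ρ V with
  | bot => exact ⟨{[]}, orth_singleton_nil.symm⟩
  | cvar X ts => exact hV .sp X _
  | arr A _ ih =>
    obtain ⟨P, hP⟩ := ih ρ hV
    refine ⟨Set.image2 List.cons (A.realizers I pole ρ V) P, ?_⟩
    rw [orth_image2_cons, Form.realizers, hP]
  | fall _ ih =>
    choose P hP using fun x => ih (scons x ρ) hV
    refine ⟨⋃ x, P x, ?_⟩
    rw [orth_iUnion, Form.realizers]
    simp only [hP, Set.ofPred_forall, Set.ofPred_mem_eq]
  | pall k _ ih =>
    choose P hP using fun F : {F // Admissible pole k F} => ih ρ (hV.push F.2)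
    refine ⟨⋃ F, P F, ?_⟩
    rw [orth_iUnion, Form.realizers]
    ext t
    simp only [← hP, Set.mem_iInter, Subtype.forall, Set.mem_ofPred_eq]

theorem cc_mem_realizers (hp : IsPole pole) (ρ : ℕ → M) (V : PredEnv M) :
    cc ∈ (Form.pall PK.sp (.arr (.arr (.arr (.pvar PK.sp 0 []) .bot) .bot)
      (.pvar PK.sp 0 [])) : Form S).realizers I pole ρ V := by
  intro F hF u hu
  obtain ⟨P, hP⟩ := hF []
  have realizers_pvar : (Form.pvar PK.sp 0 [] : Form S).realizers I pole ρ (V.push .sp F) =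
      orth pole P := hP
  simp only [Form.realizers] at hu realizers_pvar ⊢
  rw [realizers_pvar] at hu ⊢
  exact app_cc_mem_orth hp hu

variable (pole) in
/-- The substitution `σ` realizes the context `Γ`. -/
def RealizesCtx (Γ : List (Form S)) (ρ : ℕ → M) (V : PredEnv M) (σ : ℕ → LC) : Prop :=
  ∀ i B, Γ[i]? = some B → σ i ∈ B.realizers I pole ρ V

theorem realizesCtx_nil (ρ : ℕ → M) (V : PredEnv M) (σ : ℕ → LC) :
    RealizesCtx (S := S) I pole [] ρ V σ := by
  intro i B hi
  cases hi

variable {I}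

theorem RealizesCtx.cons {Γ : List (Form S)} {A : Form S} {ρ : ℕ → M} {V : PredEnv M}
    {σ : ℕ → LC} {u : LC} (h : RealizesCtx I pole Γ ρ V σ) (hu : u ∈ A.realizers I pole ρ V) :
    RealizesCtx I pole (A :: Γ) ρ V (scons u σ) := by
  rintro (_ | i) B hi
  · obtain rfl : A = B := Option.some.inj hi
    exact hu
  · exact h i B hi

theorem RealizesCtx.map {Γ : List (Form S)} {ρ ρ' : ℕ → M} {V V' : PredEnv M} {σ : ℕ → LC}
    {φ : Form S → Form S} (h : RealizesCtx I pole Γ ρ V σ)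
    (hφ : ∀ A, (φ A).realizers I pole ρ' V' = A.realizers I pole ρ V) :
    RealizesCtx I pole (Γ.map φ) ρ' V' σ := by
  intro i B hi
  rw [List.getElem?_map] at hi
  obtain ⟨A, hA, rfl⟩ := Option.map_eq_some_iff.1 hi
  exact hφ A ▸ h i A hA

theorem adequacy (hp : IsPole pole) {E : Set (FOTerm S × FOTerm S)} (hE : Models I E)
    {Γ : List (Form S)} {t : LC} {A : Form S} (h : M2 S E Γ t A) {ρ : ℕ → M} {V : PredEnv M}
    (hV : V.IsAdmissible pole) {σ : ℕ → LC} (hσ : RealizesCtx I pole Γ ρ V σ) :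
    t.subst σ ∈ A.realizers I pole ρ V := by
  induction h generalizing ρ V σ with
  | ccAx => exact cc_mem_realizers I hp ρ V
  | var h => exact hσ _ _ h
  | absI _ ih =>
    intro u hu
    refine saturated_realizers I hp _ ρ hV _ u [] ?_
    rw [subst_liftSub_subst0]
    exact ih hV (hσ.cons hu)
  | appE _ _ ihu ihv => exact ihu hV hσ _ (ihv hV hσ)
  | fallI _ ih => exact fun x => ih hV (hσ.map fun A => realizers_shiftFO I A x ρ V)
  | fallE u _ ih => exact realizers_substFO0 I _ u ρ V ▸ ih hV hσ _
  | pallI _ ih | pallIC _ ih =>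
    exact fun F hF => ih (hV.push hF) (hσ.map fun A => realizers_rename2_succ_push I _ A F ρ V)
  | pallE G _ ih =>
    rw [realizers_inst2_0]
    exact ih hV hσ _ fun l => saturated_realizers I hp G _ hV
  | pallEC G hG _ ih =>
    rw [realizers_inst2_0]
    exact ih hV hσ _ fun l => hG.realizers_eq_orth I _ hV
  | eqE _ huv ih =>
    have h := ih hV hσ
    rw [realizers_substFO0] at h ⊢
    rwa [← hE.eval_eq_of_eqE I huv]

end Adequacy

end Realizability

section AdmissibleEnvironments

open LC

variable {S : Sig} {M : Type*} {I : (f : S.Fn) → (Fin (S.arFn f) → M) → M} {pole : Set LC}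

variable (M) in
theorem exists_isAdmissible (hp : IsPole pole) : ∃ V : PredEnv M, V.IsAdmissible pole := by
  refine ⟨fun _ _ _ => orth pole ∅, fun k _ => ?_⟩
  cases k with
  | pl => exact fun _ => saturated_orth hp ∅
  | sp => exact fun _ => ⟨∅, rfl⟩

theorem mem_realizers_of_typed_nil (hp : IsPole pole) {E : Set (FOTerm S × FOTerm S)}
    (hE : Models I E) {t : LC} {A : Form S} (h : M2 S E [] t A) (ρ : ℕ → M) {V : PredEnv M}
    (hV : V.IsAdmissible pole) : t ∈ A.realizers I pole ρ V :=
  subst_var t ▸ adequacy hp hE h hV (realizesCtx_nil I ρ V var)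

end AdmissibleEnvironments

section Integers

open LC

/-- The standard interpretation of `0` and `s` in `ℕ`. -/
def natInterp : (f : NatSig.Fn) → (Fin (NatSig.arFn f) → ℕ) → ℕ
  | .zero, _ => 0
  | .succ, x => x ⟨0, Nat.one_pos⟩ + 1

theorem eval_numT (ρ : ℕ → ℕ) (n : ℕ) : (numT n).eval natInterp ρ = n := by
  induction n with
  | zero => rfl
  | succ n ih => exact congrArg Nat.succ ih

theorem subst_numT (ρ : ℕ → ℕ) (t : FOTerm NatSig) :
    t.subst (fun i => numT (ρ i)) = numT (t.eval natInterp ρ) := by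
  induction t with
  | var i => rfl
  | fn f ts ih =>
    cases f with
    | zero => exact congrArg (FOTerm.fn (S := NatSig) NatFn.zero) (funext fun i => i.elim0)
    | succ =>
      refine congrArg (FOTerm.fn (S := NatSig) NatFn.succ) (funext fun i => ?_)
      obtain rfl : i = ⟨0, Nat.one_pos⟩ := Subsingleton.elim (α := Fin 1) _ _
      exact ih _

theorem Adequate.numT_injective {E : Set (FOTerm NatSig × FOTerm NatSig)} (hE : Adequate E)
    {a b : ℕ} (h : EqE E (numT a) (numT b)) : a = b := by
  induction a generalizing b with
  | zero =>
    cases b with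
    | zero => rfl
    | succ b => exact absurd (h.symm _ _) (hE.1 _)
  | succ a ih =>
    cases b with
    | zero => exact absurd h (hE.1 _)
    | succ b => rw [ih (hE.2 _ _ h)]

theorem Adequate.models {E : Set (FOTerm NatSig × FOTerm NatSig)} (hE : Adequate E) :
    Models natInterp E := by
  intro p hp ρ
  apply hE.numT_injective
  rw [← subst_numT, ← subst_numT]
  exact .rel _ _ ⟨p, hp, _, rfl, rfl⟩

/-- The sequence `F` of sets of terms contains `a` at `0` and is stable under `b` from each rank to
the next. -/
def IsInductive (F : ℕ → Set LC) (a b : LC) : Prop :=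
  a ∈ F 0 ∧ ∀ j, ∀ v ∈ F j, app b v ∈ F (j + 1)

/-- The term `u` behaves against the pole as a classical integer of value `n`. -/
def RealizesClassicalNat (pole : Set LC) (n : ℕ) (u : LC) : Prop :=
  ∀ (P : ℕ → Set (List LC)) (a b : LC), IsInductive (fun j => orth pole (P j)) a b →
    app (app u a) b ∈ orth pole (P n)

variable {pole : Set LC} {ρ : ℕ → ℕ} {V : PredEnv ℕ} {t : FOTerm NatSig} {u : LC}

theorem mem_realizers_NFormK {k : PK} :
    u ∈ (NFormK k t).realizers natInterp pole ρ V ↔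
      ∀ F, Admissible pole k F → ∀ a b, IsInductive (fun j => F [j]) a b →
        app (app u a) b ∈ F [t.eval natInterp ρ] := by
  have push_zero (F : List ℕ → Set LC) : V.push k F k 0 = F := by
    rw [PredEnv.push, Function.update_self, scons_zero]
  simp only [NFormK, Form.realizers, push_zero, IsInductive]
  exact ⟨fun h F hF a b hab => h F hF a hab.1 b hab.2,
    fun h F hF a ha b hb => h F hF a b ⟨ha, hb⟩⟩

theorem mem_realizers_NFormK_sp :
    u ∈ (NFormK .sp t).realizers natInterp pole ρ V ↔
      RealizesClassicalNat pole (t.eval natInterp ρ) u := by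
  rw [mem_realizers_NFormK]
  constructor
  · exact fun h P a b hab => h (fun l => orth pole (P l.headI)) (fun l => ⟨_, rfl⟩) a b hab
  · intro h F hF a b hab
    choose P hP using hF
    simp only [hP] at hab ⊢
    exact h (fun j => P [j]) a b hab

theorem realizesClassicalNat_of_typed (hp : IsPole pole) {E : Set (FOTerm NatSig × FOTerm NatSig)}
    (hE : Adequate E) {θ : LC} {n : ℕ} (hθ : M2 NatSig E [] θ (NFormK .sp (numT n))) :
    RealizesClassicalNat pole n θ := by
  obtain ⟨V, hV⟩ := exists_isAdmissible ℕ hp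
  have h := mem_realizers_of_typed_nil hp hE.models hθ 0 hV
  rwa [mem_realizers_NFormK_sp, eval_numT] at h

theorem betaEq_church_of_mem_realizers
    (hu : u ∈ (NFormK .pl t).realizers natInterp pole ρ V) :
    BetaEq u (church (t.eval natInterp ρ)) := by
  obtain ⟨x, hx⟩ := u.finite_freeVars.exists_notMem
  obtain ⟨g, hg⟩ := (u.finite_freeVars.insert x).exists_notMem
  rw [Set.mem_insert_iff, not_or] at hg
  let F (l : List ℕ) : Set LC := {v | BetaRed v (iterApp (var g) l.headI (var x))}
  have saturated_F : Admissible pole .pl F :=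
    fun l v w π h => ReflTransGen.head ((Beta.beta v w).appSpine π) h
  have inductive_F : IsInductive (fun j => F [j]) (var x) (var g) :=
    ⟨.refl, fun j v hv => BetaRed.appR (var g) hv⟩
  exact betaEq_church hx hg.2 hg.1
    (mem_realizers_NFormK.1 hu F saturated_F (var x) (var g) inductive_F)

end Integers

section Tables

theorem exists_forall_infinite_preimage_singleton (α : Type*) [Nonempty α] [Countable α] :
    ∃ f : ℕ → α, ∀ x, (f ⁻¹' {x}).Infinite := by
  obtain ⟨g, hg⟩ := exists_surjective_nat α
  refine ⟨fun k => g k.unpair.1, fun x => ?_⟩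
  obtain ⟨a, rfl⟩ := hg x
  refine Set.infinite_of_injective_forall_mem (f := Nat.pair a) ?_ fun m => ?_
  · exact fun m m' h => (Nat.pair_eq_pair.1 h).2
  · rw [Set.mem_preimage, Nat.unpair_pair, Set.mem_singleton_iff]

/-- An injective code of terms by natural numbers, for the countability of the set of terms. -/
def LC.code : LC → ℕ
  | var i => Nat.pair 0 i
  | app u v => Nat.pair 1 (Nat.pair u.code v.code)
  | abs u => Nat.pair 2 u.code
  | cc => Nat.pair 3 0

theorem LC.code_injective : Function.Injective code := by
  intro u v h
  induction u generalizing v with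
  | var i => cases v <;> simp_all [code, Nat.pair_eq_pair]
  | app a b iha ihb =>
    cases v with
    | app a' b' =>
      simp only [code, Nat.pair_eq_pair, true_and] at h
      rw [iha h.1, ihb h.2]
    | _ => simp [code, Nat.pair_eq_pair] at h
  | abs a ih =>
    cases v with
    | abs a' =>
      simp only [code, Nat.pair_eq_pair, true_and] at h
      rw [ih h]
    | _ => simp [code, Nat.pair_eq_pair] at h
  | cc => cases v <;> simp_all [code, Nat.pair_eq_pair]

instance : Countable LC := LC.code_injective.countable

instance : Nonempty LC := ⟨LC.cc⟩

end Tables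

namespace SymbolicRun

open LC

/-- The name with index `k`. The variables `0` and `1` are reserved for `f` and for the unknown
integer `ν`. -/
def name (k : ℕ) : LC := var (k + 2)

/-- The names occurring in a term. -/
def names (t : LC) : Set ℕ := (· + 2) ⁻¹' t.freeVars

theorem names_name (k : ℕ) : names (name k) = {k} := by
  ext i
  exact Nat.add_right_cancel_iff

theorem names_app (t u : LC) : names (app t u) = names t ∪ names u := rfl

theorem names_appSpine_subset_iff {t : LC} {π : List LC} {D : Set ℕ} :
    names (appSpine t π) ⊆ D ↔ names t ⊆ D ∧ ∀ v ∈ π, names v ⊆ D := by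
  simp only [names, freeVars_appSpine, Set.preimage_union, Set.preimage_iUnion,
    Set.union_subset_iff, Set.iUnion_subset_iff]

section Machine

/-- `Unfolds table D k D' u`: the name `k`, standing for the suspended iteration `bʲ a` when
`table k = (a, b, j)`, unfolds to `u`, where the set of names in use grows from `D` to `D'`. -/
inductive Unfolds (table : ℕ → LC × LC × ℕ) : Finset ℕ → ℕ → Finset ℕ → LC → Prop
  | zero {D k a b} : table k = (a, b, 0) → Unfolds table D k D a
  | succ {D k a b j l} : table k = (a, b, j + 1) → l ∉ D → table l = (a, b, j) →
      Unfolds table D k (insert l D) (app b (name l))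

/-- A step of the symbolic execution of a term in which `ν` stands for an unknown integer of value
`n`: when `ν a b` comes to the head, it is replaced by a fresh name for the iteration `bⁿ a`. -/
inductive Step (table : ℕ → LC × LC × ℕ) (n : ℕ) : Finset ℕ → LC → Finset ℕ → LC → Prop
  | head {D t t'} : HCStep t t' → Step table n D t D t'
  | input {D k a b π} : k ∉ D → table k = (a, b, n) →
      Step table n D (appSpine (app (app (var 1) a) b) π) (insert k D) (appSpine (name k) π)
  | unfold {D k D' u π} : Unfolds table D k D' u →
      Step table n D (appSpine (name k) π) D' (appSpine u π)

/-- The set `D` of names in use contains the names of `t` and is closed under passing from a name to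
the names occurring in its entry of the table. -/
def WellScoped (table : ℕ → LC × LC × ℕ) (D : Finset ℕ) (t : LC) : Prop :=
  names t ⊆ D ∧ ∀ k ∈ D, names (table k).1 ⊆ D ∧ names (table k).2.1 ⊆ D

/-- `Reaches table n τ m D t`: the symbolic execution of `t` halts on `f τ` after `m` steps, all
performed on well-scoped terms. -/
inductive Reaches (table : ℕ → LC × LC × ℕ) (n : ℕ) (τ : LC) : ℕ → Finset ℕ → LC → Prop
  | halt {D} : Reaches table n τ 0 D (app (var 0) τ)
  | step {m D t D' t'} : WellScoped table D t → Step table n D t D' t' →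
      Reaches table n τ m D' t' → Reaches table n τ (m + 1) D t

variable {table : ℕ → LC × LC × ℕ} {n : ℕ}

theorem WellScoped.insert_name {D : Finset ℕ} {t t' : LC} {k : ℕ} (h : WellScoped table D t)
    (ht' : names t' ⊆ (insert k D : Finset ℕ)) (ha : names (table k).1 ⊆ D)
    (hb : names (table k).2.1 ⊆ D) : WellScoped table (insert k D) t' := by
  have subset_insert : (D : Set ℕ) ⊆ (insert k D : Finset ℕ) :=
    Finset.coe_subset.2 (Finset.subset_insert k D)
  refine ⟨ht', fun k' hk' => ?_⟩
  rcases Finset.mem_insert.1 hk' with rfl | hk'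
  · exact ⟨ha.trans subset_insert, hb.trans subset_insert⟩
  · exact (h.2 k' hk').imp (·.trans subset_insert) (·.trans subset_insert)

theorem WellScoped.step {D D' : Finset ℕ} {t t' : LC} (h : WellScoped table D t)
    (hstep : Step table n D t D' t') : WellScoped table D' t' := by
  cases hstep with
  | head h' => exact ⟨(Set.preimage_mono h'.freeVars_subset).trans h.1, h.2⟩
  | @input k _ _ _ _ hk =>
    obtain ⟨hab, hπ⟩ := names_appSpine_subset_iff.1 h.1
    simp only [names_app, Set.union_subset_iff] at hab
    refine h.insert_name (names_appSpine_subset_iff.2 ⟨?_, fun v hv => ?_⟩) ?_ ?_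
    · simp [names_name]
    · exact (hπ v hv).trans (Finset.coe_subset.2 (Finset.subset_insert k D))
    · simpa only [hk] using hab.1.2
    · simpa only [hk] using hab.2
  | @unfold k _ _ _ hu =>
    obtain ⟨hk, hπ⟩ := names_appSpine_subset_iff.1 h.1
    rw [names_name, Set.singleton_subset_iff] at hk
    obtain ⟨ha, hb⟩ := h.2 k hk
    cases hu with
    | zero hk =>
      rw [hk] at ha
      exact ⟨names_appSpine_subset_iff.2 ⟨ha, hπ⟩, h.2⟩
    | @succ _ b _ k' hk _ hk' =>
      rw [hk] at ha hb
      have subset_insert : (D : Set ℕ) ⊆ (insert k' D : Finset ℕ) :=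
        Finset.coe_subset.2 (Finset.subset_insert k' D)
      refine h.insert_name (names_appSpine_subset_iff.2 ⟨?_, fun v hv => ?_⟩) ?_ ?_
      · rw [names_app, names_name]
        exact Set.union_subset (hb.trans subset_insert) (by simp)
      · exact (hπ v hv).trans subset_insert
      · rwa [hk']
      · rwa [hk']

variable (table n) in
/-- The symbolic execution of `t` halts on `f τ` for some `τ` equivalent to the Church integer
`n`. -/
def Stores (D : Finset ℕ) (t : LC) : Prop :=
  ∃ τ, BetaEq τ (church n) ∧ ∃ m, Reaches table n τ m D t

theorem Stores.of_step {D D' : Finset ℕ} {t t' : LC} (h : WellScoped table D t)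
    (hstep : Step table n D t D' t') (h' : Stores table n D' t') : Stores table n D t :=
  let ⟨τ, hτ, m, hm⟩ := h'
  ⟨τ, hτ, m + 1, .step h hstep hm⟩

variable (table n) in
/-- The pole whose realizers are studied to obtain `τ`: the terms whose symbolic execution halts on
some `f τ` with `τ` equivalent to the Church integer `n`. -/
def storePole : Set LC := {t | ∀ D, WellScoped table D t → Stores table n D t}

theorem mem_storePole_of_step {t : LC}
    (h : ∀ D, WellScoped table D t → ∃ D', ∃ t' ∈ storePole table n, Step table n D t D' t') :
    t ∈ storePole table n := by
  intro D hD
  obtain ⟨D', t', ht', hstep⟩ := h D hD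
  exact .of_step hD hstep (ht' D' (hD.step hstep))

theorem isPole_storePole : IsPole (storePole table n) :=
  fun _ t' h ht' => mem_storePole_of_step fun D _ => ⟨D, t', ht', .head h⟩

theorem exists_fresh_name (htable : ∀ x, (table ⁻¹' {x}).Infinite) (D : Finset ℕ)
    (x : LC × LC × ℕ) : ∃ k ∉ D, table k = x := by
  obtain ⟨k, hk, hkD⟩ := (htable x).exists_notMem_finset D
  exact ⟨k, hkD, hk⟩

theorem name_mem_orth (htable : ∀ x, (table ⁻¹' {x}).Infinite) {P : ℕ → Set (List LC)} {a b : LC}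
    (hab : IsInductive (fun j => orth (storePole table n) (P j)) a b) {j k : ℕ}
    (hk : table k = (a, b, j)) : name k ∈ orth (storePole table n) (P j) := by
  intro π hπ
  refine mem_storePole_of_step fun D _ => ?_
  induction j generalizing k π D with
  | zero => exact ⟨D, _, hab.1 π hπ, .unfold (.zero hk)⟩
  | succ j ih =>
    obtain ⟨k', hk'D, hk'⟩ := exists_fresh_name htable D (a, b, j)
    have hname : name k' ∈ orth (storePole table n) (P j) :=
      fun π hπ => mem_storePole_of_step fun D hD => ih hk' π hπ D hD
    exact ⟨_, _, hab.2 j _ hname π hπ, .unfold (.succ hk hk'D hk')⟩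

theorem realizesClassicalNat_input (htable : ∀ x, (table ⁻¹' {x}).Infinite) :
    RealizesClassicalNat (storePole table n) n (var 1) := by
  intro P a b hab π hπ
  refine mem_storePole_of_step fun D _ => ?_
  obtain ⟨k, hkD, hk⟩ := exists_fresh_name htable D (a, b, n)
  exact ⟨_, _, name_mem_orth htable hab hk π hπ, .input hkD hk⟩

theorem stores_of_typed (htable : ∀ x, (table ⁻¹' {x}).Infinite)
    {E : Set (FOTerm NatSig × FOTerm NatSig)} (hE : Adequate E) {T : LC}
    (hT : M2 NatSig E [] T storTypeC) : Stores table n ∅ (app (app T (var 1)) (var 0)) := by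
  have hp : IsPole (storePole table n) := isPole_storePole
  obtain ⟨V, hV⟩ := exists_isAdmissible ℕ hp
  have stores_of_church (u : LC) (hu : u ∈ (NFormK .pl (.var 0)).realizers natInterp
      (storePole table n) (scons n 0) V) : app (var 0) u ∈ storePole table n :=
    fun _ _ => ⟨u, betaEq_church_of_mem_realizers hu, 0, .halt⟩
  have hT' : app (app T (var 1)) (var 0) ∈ storePole table n :=
    mem_realizers_of_typed_nil hp hE.models hT 0 hV n (var 1)
      (mem_realizers_NFormK_sp.2 (realizesClassicalNat_input htable)) (var 0) stores_of_church
  refine hT' ∅ ⟨?_, by simp⟩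
  rintro i (((hi | hi) | hi))
  · rw [hT.freeVars_eq_empty] at hi
    cases hi
  · cases hi
  · cases hi

end Machine

section Simulation

/-- The instance of a symbolic term in which `ν` is replaced by `θ` and each name by its value. -/
def inst (θ : LC) (s : ℕ → LC) (t : LC) : LC := t.subst (scons (var 0) (scons θ s))

theorem inst_congr {θ : LC} {s s' : ℕ → LC} {t : LC} (h : Set.EqOn s s' (names t)) :
    inst θ s t = inst θ s' t := by
  refine subst_congr ?_
  rintro (_ | _ | k) hk
  · rfl
  · rfl
  · exact h hk

theorem inst_app (θ : LC) (s : ℕ → LC) (t u : LC) :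
    inst θ s (app t u) = app (inst θ s t) (inst θ s u) := rfl

theorem inst_appSpine (θ : LC) (s : ℕ → LC) (t : LC) (π : List LC) :
    inst θ s (appSpine t π) = appSpine (inst θ s t) (π.map (inst θ s)) :=
  appSpine_subst t π _

theorem eqOn_update {s : ℕ → LC} {D : Finset ℕ} {k : ℕ} (hk : k ∉ D) (v : LC) :
    Set.EqOn s (update s k v) D := by
  rintro k' hk'
  refine (Function.update_of_ne ?_ v s).symm
  rintro rfl
  exact hk hk'

theorem inst_update {θ : LC} {s : ℕ → LC} {D : Finset ℕ} {k : ℕ} (hk : k ∉ D) {t : LC}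
    (ht : names t ⊆ D) (v : LC) : inst θ (update s k v) t = inst θ s t :=
  (inst_congr ((eqOn_update hk v).mono ht)).symm

theorem inst_update_name (θ : LC) (s : ℕ → LC) (k : ℕ) (v : LC) :
    inst θ (update s k v) (name k) = v :=
  Function.update_self (β := fun _ => LC) k v s

theorem map_inst_update {θ : LC} {s : ℕ → LC} {D : Finset ℕ} {k : ℕ} (hk : k ∉ D) {π : List LC}
    (hπ : ∀ t ∈ π, names t ⊆ D) (v : LC) :
    π.map (inst θ (update s k v)) = π.map (inst θ s) :=
  List.map_congr_left fun t ht => inst_update hk (hπ t ht) v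

variable (table : ℕ → LC × LC × ℕ) (n : ℕ) (τ : LC) (pole : Set LC) (θ : LC)

/-- The stacks met by the name `k` in the executions halting on `f τ` in less than `m` steps, whose
names `D'` extend `D` and take values `s'` extending `s`. The values of the names are themselves
required to be orthogonal to the stacks that those names meet later. -/
def futureStacks (m : ℕ) (D : Finset ℕ) (s : ℕ → LC) (k : ℕ) : Set (List LC) :=
  {ξ | ∃ m', ∃ _ : m' < m, ∃ D' s' π D'' u, D ⊆ D' ∧ Set.EqOn s s' D ∧ (∀ v ∈ π, names v ⊆ D') ∧
    Unfolds table D' k D'' u ∧ Reaches table n τ m' D'' (appSpine u π) ∧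
    (∀ k' ∈ D', s' k' ∈ orth pole (futureStacks m' D' s' k')) ∧ π.map (inst θ s') = ξ}
termination_by m

/-- The values of the names in `D` are orthogonal to the stacks that these names can meet in less
than `m` steps. -/
def Good (m : ℕ) (D : Finset ℕ) (s : ℕ → LC) : Prop :=
  ∀ k ∈ D, s k ∈ orth pole (futureStacks table n τ pole θ m D s k)

/-- The stacks that a name for the iteration `bʲ a` can meet in less than `m` steps. -/
def iterationStacks (m : ℕ) (D : Finset ℕ) (s : ℕ → LC) (a b : LC) (j : ℕ) : Set (List LC) :=
  {ξ | ∃ k, table k = (a, b, j) ∧ ξ ∈ futureStacks table n τ pole θ m D s k}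

variable {table n τ pole θ}

theorem mem_futureStacks {m : ℕ} {D : Finset ℕ} {s : ℕ → LC} {k : ℕ} {ξ : List LC} :
    ξ ∈ futureStacks table n τ pole θ m D s k ↔
      ∃ m' < m, ∃ D' s' π D'' u, D ⊆ D' ∧ Set.EqOn s s' D ∧ (∀ v ∈ π, names v ⊆ D') ∧
        Unfolds table D' k D'' u ∧ Reaches table n τ m' D'' (appSpine u π) ∧
        Good table n τ pole θ m' D' s' ∧ π.map (inst θ s') = ξ := by
  rw [futureStacks]
  simp only [Set.mem_ofPred_eq, exists_prop, Good]

variable {m m' : ℕ} {D D' : Finset ℕ} {s s' : ℕ → LC}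

theorem futureStacks_mono (hm : m' ≤ m) (hD : D ⊆ D') (hs : Set.EqOn s s' D) (k : ℕ) :
    futureStacks table n τ pole θ m' D' s' k ⊆ futureStacks table n τ pole θ m D s k := by
  intro ξ hξ
  obtain ⟨m₁, hm₁, D₁, s₁, π, D₂, u, hD₁, hs₁, h⟩ := mem_futureStacks.1 hξ
  exact mem_futureStacks.2 ⟨m₁, hm₁.trans_le hm, D₁, s₁, π, D₂, u, hD.trans hD₁,
    hs.trans (hs₁.mono hD), h⟩

theorem Good.mono (hg : Good table n τ pole θ m D s) (hm : m' ≤ m) :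
    Good table n τ pole θ m' D s :=
  fun k hk => orth_antitone (futureStacks_mono hm subset_rfl (Set.eqOn_refl s D) k) (hg k hk)

theorem Good.insert_name (hg : Good table n τ pole θ m D s) {k : ℕ} (hk : k ∉ D) {v : LC}
    (hv : v ∈ orth pole
      (futureStacks table n τ pole θ m (insert k D) (update s k v) k)) :
    Good table n τ pole θ m (insert k D) (update s k v) := by
  intro k' hk'
  rcases Finset.mem_insert.1 hk' with rfl | hk'
  · rwa [Function.update_self]
  · rw [← eqOn_update hk v hk']
    exact orth_antitone
      (futureStacks_mono le_rfl (Finset.subset_insert k D) (eqOn_update hk v) k') (hg k' hk')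

theorem Good.insert_iteration (hg : Good table n τ pole θ m D s) {D₀ : Finset ℕ} {s₀ : ℕ → LC}
    {m₀ : ℕ} (hm : m ≤ m₀) (hD : D₀ ⊆ D) (hs : Set.EqOn s₀ s D₀) {k : ℕ} (hk : k ∉ D)
    {a b : LC} {j : ℕ} (htable : table k = (a, b, j)) {v : LC}
    (hv : v ∈ orth pole (iterationStacks table n τ pole θ m₀ D₀ s₀ a b j)) :
    Good table n τ pole θ m (insert k D) (update s k v) := by
  have subset_iterationStacks : futureStacks table n τ pole θ m (insert k D) (update s k v) k ⊆
      iterationStacks table n τ pole θ m₀ D₀ s₀ a b j := fun ξ hξ =>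
    ⟨k, htable, futureStacks_mono hm (hD.trans (Finset.subset_insert k D))
      (hs.trans ((eqOn_update hk v).mono hD)) k hξ⟩
  exact hg.insert_name hk (orth_antitone subset_iterationStacks hv)

theorem isInductive_iterationStacks {a b : LC} (ha : names a ⊆ D) (hb : names b ⊆ D)
    (ih : ∀ m' < m, ∀ {D' s' t}, Reaches table n τ m' D' t → Good table n τ pole θ m' D' s' →
      inst θ s' t ∈ pole) :
    IsInductive (fun j => orth pole (iterationStacks table n τ pole θ m D s a b j))
      (inst θ s a) (inst θ s b) := by
  constructor
  · rintro ξ ⟨k, hk, hξ⟩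
    obtain ⟨m', hm', D', s', π, D'', u, -, hs, -, hu, hrun, hg, rfl⟩ := mem_futureStacks.1 hξ
    cases hu with
    | succ hk' => simp [hk] at hk'
    | zero hk' =>
      obtain ⟨rfl, -⟩ := Prod.mk.inj (hk.symm.trans hk')
      rw [inst_congr (hs.mono ha), ← inst_appSpine]
      exact ih m' hm' hrun hg
  · rintro j v hv ξ ⟨k, hk, hξ⟩
    obtain ⟨m', hm', D', s', π, D'', u, hD, hs, hπ, hu, hrun, hg, rfl⟩ := mem_futureStacks.1 hξ
    cases hu with
    | zero hk' => simp [hk] at hk'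
    | @succ a' b' j' k' hk' hk'D htable =>
      simp only [hk, Prod.mk.injEq, add_left_inj] at hk'
      obtain ⟨rfl, rfl, rfl⟩ := hk'
      have run_mem := ih m' hm' hrun (hg.insert_iteration hm'.le hD hs hk'D htable hv)
      rw [inst_appSpine, map_inst_update hk'D hπ, inst_app, inst_update_name,
        inst_update hk'D (hb.trans hD)] at run_mem
      rwa [inst_congr (hs.mono hb)]

theorem inst_mem_pole (hp : IsPole pole) (hfinal : ∀ s, app (var 0) (inst θ s τ) ∈ pole)
    (hθ : RealizesClassicalNat pole n θ) {t : LC} (hrun : Reaches table n τ m D t)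
    (hg : Good table n τ pole θ m D s) : inst θ s t ∈ pole := by
  induction m using Nat.strong_induction_on generalizing D s t with
  | h m ih =>
    cases hrun with
    | halt => exact hfinal s
    | @step m' _ t D' t' hscope hstep hrun =>
      have hm : m' < m' + 1 := Nat.lt_succ_self m'
      cases hstep with
      | head h => exact hp (h.subst _) (ih m' hm hrun (hg.mono hm.le))
      | @input k a b π hkD hk =>
        obtain ⟨hab, hπ⟩ := names_appSpine_subset_iff.1 hscope.1
        simp only [names_app, Set.union_subset_iff] at hab
        have value_mem := hθ _ _ _ (isInductive_iterationStacks (s := s) hab.1.2 hab.2 ih)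
        have run_mem := ih m' hm hrun ((hg.mono hm.le).insert_iteration hm.le subset_rfl
          (Set.eqOn_refl s D) hkD hk value_mem)
        rw [inst_appSpine, map_inst_update hkD hπ, inst_update_name] at run_mem
        rwa [inst_appSpine]
      | @unfold k _ u π hu =>
        obtain ⟨hk, hπ⟩ := names_appSpine_subset_iff.1 hscope.1
        rw [names_name, Set.singleton_subset_iff] at hk
        rw [inst_appSpine]
        exact hg k hk _ (mem_futureStacks.2 ⟨m', hm, D, s, π, D', u, subset_rfl,
          Set.eqOn_refl s D, hπ, hu, hrun, hg.mono hm.le, rfl⟩)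

end Simulation

end SymbolicRun

open LC in
/-- The storage theorem in the mixed system M2 : if
`⊢_M2 T : ∀x{N^C[x] → ¬¬N[x]}`, then `T` is a storage operator for classical
integers : for every `n` there is a λC-term `τₙ ≃β n̲` such that for every
classical integer `θₙ` of value `n` there is a substitution `σ` with
`(T)θₙf ≻_C (f)σ(τₙ)`. -/
theorem stmt16 (E : Set (FOTerm NatSig × FOTerm NatSig)) (hE : Adequate E)
    (T : LC) (hT : M2 NatSig E [] T storTypeC) :
    ∀ n : ℕ, ∃ τ : LC, BetaEq τ (church n) ∧
      ∀ θ : LC, Closed θ → M2 NatSig E [] θ (NFormK PK.sp (numT n)) →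
        ∃ σ : ℕ → LC, σ 0 = var 0 ∧
          HCRed (app (app T θ) (var 0)) (app (var 0) (τ.subst σ)) := by
  intro n
  obtain ⟨table, htable⟩ := exists_forall_infinite_preimage_singleton (LC × LC × ℕ)
  obtain ⟨τ, hτ, m, hrun⟩ := SymbolicRun.stores_of_typed (n := n) htable hE hT
  refine ⟨τ, hτ, fun θ _ hθ => ?_⟩
  let pole : Set LC := {t | ∃ σ : ℕ → LC, σ 0 = var 0 ∧ HCRed t (app (var 0) (τ.subst σ))}
  have hp : IsPole pole := fun _ _ h ⟨σ, hσ, h'⟩ => ⟨σ, hσ, .head h h'⟩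
  have hfinal (s : ℕ → LC) : app (var 0) (SymbolicRun.inst θ s τ) ∈ pole :=
    ⟨scons (var 0) (scons θ s), rfl, .refl⟩
  have hθ' : RealizesClassicalNat pole n θ := realizesClassicalNat_of_typed hp hE hθ
  have no_names : SymbolicRun.Good table n τ pole θ m ∅ var := by simp [SymbolicRun.Good]
  have hmem := SymbolicRun.inst_mem_pole hp hfinal hθ' hrun no_names
  rwa [SymbolicRun.inst_app, SymbolicRun.inst_app, SymbolicRun.inst,
    subst_eq_self hT.freeVars_eq_empty] at hmem
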